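/- Let G be any group with a finite collection {σ₁, …, σₙ} of pairwise non-isomorphic splittings, where σⱼ is a splitting over Hⱼ, satisfying sandwiching. For each j let Xⱼ be the almost invariant set arising from σⱼ, and let Σ := Σ(X₁) ∪ … ∪ Σ(Xₙ), equipped with the relation ≤ (A ≤ B iff A ∩ B* is empty or is the only small corner of (A,B)) and with complementation A ↦ A* = G \ A. Then there exists an ultrafilter V on (Σ, ≤) satisfying the descending chain condition: for every A ∈ Σ exactly one of A, A* lies in V; whenever A ∈ V and A ≤ B then B ∈ V; and every descending chain A₁ ≥ A₂ ≥ … of elements of V is eventually constant. -/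

import Mathlib

/-!
The family `Σ(Xⱼ)` of a splitting is the set of half-trees of the tree `Tⱼ`, seen through the orbit
of the base vertex. Three features of it are used (`TreeLike`, proved in
`GTree.IsSplitting.treeLike`): its members are pairwise nested, only finitely many of them separate
two given elements of `G`, and each properly contains another one (the tree has no leaves). They
imply that every member is a nontrivial almost invariant set over its own stabilizer
(`TreeLike.nontrivAI`), without any finite generation hypothesis.

For nontrivial almost invariant sets, smallness of a corner is symmetric in the two sets
(`small_symm`) and almost inclusion is transitive (`AlmostSub.trans`). Consequently `A ≤ B` is
equivalent to `A ⊆ B`, or `A` almost contained in `B` but not conversely (`aile_iff`); this is a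
partial order reversed by complementation, and on a single `Σ(Xⱼ)` it is plain inclusion
(`TreeLike.subset_of_aile`).

The ultrafilter is built one family at a time, keeping a strong form of the descending chain
condition: below each `E ∈ Σ(Xⱼ)` there are only finitely many chosen members of `Σ(Xⱼ)`
(`IsDiscreteUltrafilter`). Given the choices for some families, the elements of `Σ(Xₖ)` lying above
a chosen set are forced. If a complementary pair `{B, B*}` remains undecided, the forced choices
extend to the ultrafilter of an endpoint of the edge `B` of `Tₖ` (`TreeLike.exists_vertex`). If
everything is forced, sandwiching in both directions together with finiteness of intervals in
`Σ(Xₖ)` gives the finiteness condition for the forced choices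
(`IsDiscreteUltrafilter.extend`). Finally, an infinite descending chain returns to one of the
finitely many families infinitely often, so it repeats a value infinitely often and is eventually
constant by antisymmetry (`IsDiscreteUltrafilter.dcc`).
-/

open scoped Pointwise

universe u v w

/-- A subset `S` of `G` is `H`-finite if it is contained in the union of
finitely many right cosets `Hg` of `H` in `G`. -/
def HFinite {G : Type u} [Group G] (H : Subgroup G) (S : Set G) : Prop :=
  ∃ F : Finset G, S ⊆ ⋃ g ∈ F, (H : Set G) * {g}

/-- Two subsets of `G` are `H`-almost equal if their symmetric difference is `H`-finite. -/
def HAlmostEqual {G : Type u} [Group G] (H : Subgroup G) (A B : Set G) : Prop :=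
  HFinite H ((A \ B) ∪ (B \ A))

/-- `X` is an `H`-almost invariant subset of `G`: `hX = X` for all `h ∈ H`, and for
every `g ∈ G` the symmetric difference of `Xg` and `X` is `H`-finite. -/
def IsAlmostInvariant {G : Type u} [Group G] (H : Subgroup G) (X : Set G) : Prop :=
  (∀ h ∈ H, (fun x => h * x) '' X = X) ∧
    ∀ g : G, HAlmostEqual H ((fun x => x * g) '' X) X

/-- An `H`-almost invariant set is nontrivial if neither it nor its complement is `H`-finite. -/
def IsNontrivialAI {G : Type u} [Group G] (H : Subgroup G) (X : Set G) : Prop :=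
  ¬ HFinite H X ∧ ¬ HFinite H Xᶜ

/-- A `G`-tree: a connected acyclic simple graph together with an action of `G` on its
vertices by graph automorphisms, such that no element of `G` interchanges the two
endpoints of any edge. -/
structure GTree (G : Type u) [Group G] (V : Type v) where
  graph : SimpleGraph V
  smul : G → V → V
  smul_one : ∀ x : V, smul 1 x = x
  smul_mul : ∀ (g h : G) (x : V), smul (g * h) x = smul g (smul h x)
  adj_smul : ∀ (g : G) (x y : V), graph.Adj x y → graph.Adj (smul g x) (smul g y)
  no_inversion : ∀ (g : G) (x y : V), graph.Adj x y → ¬ (smul g x = y ∧ smul g y = x)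
  connected : graph.Connected
  acyclic : graph.IsAcyclic

namespace GTree

variable {G : Type u} [Group G] {V : Type v}

/-- The stabilizer of the directed edge `(a, b)`. -/
def edgeStab (T : GTree G V) (a b : V) : Subgroup G where
  carrier := {g : G | T.smul g a = a ∧ T.smul g b = b}
  one_mem' := ⟨T.smul_one a, T.smul_one b⟩
  mul_mem' := by
    rintro x y ⟨hxa, hxb⟩ ⟨hya, hyb⟩
    exact ⟨by rw [T.smul_mul, hya, hxa], by rw [T.smul_mul, hyb, hxb]⟩
  inv_mem' := by
    rintro x ⟨hxa, hxb⟩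
    constructor
    · conv_lhs => rw [← hxa]
      rw [← T.smul_mul, inv_mul_cancel, T.smul_one]
    · conv_lhs => rw [← hxb]
      rw [← T.smul_mul, inv_mul_cancel, T.smul_one]

/-- The `a`-side of the directed edge `(a, b)`: the set of vertices reachable from `a`
after deleting the edge `{a, b}`. -/
def side (T : GTree G V) (a b : V) : Set V :=
  {x : V | (T.graph.deleteEdges {s(a, b)}).Reachable a x}

/-- The standard set determined by the directed edge `(a, b)` and the base vertex `v`:
`{g ∈ G | g • v lies in the a-side of (a, b)}`. -/
def standardSet (T : GTree G V) (a b : V) (v : V) : Set G :=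
  {g : G | T.smul g v ∈ T.side a b}

/-- `(T, a, b)` is a splitting of `G` over `H`: the `G`-tree `T` has no global fixed
vertex, `G` acts transitively on the undirected edges, `(a, b)` is a directed edge,
and the stabilizer of `(a, b)` is `H`. -/
def IsSplitting (T : GTree G V) (a b : V) (H : Subgroup G) : Prop :=
  T.graph.Adj a b ∧
  (∀ x : V, ∃ g : G, T.smul g x ≠ x) ∧
  (∀ c d : V, T.graph.Adj c d →
    ∃ g : G, (T.smul g a = c ∧ T.smul g b = d) ∨ (T.smul g a = d ∧ T.smul g b = c)) ∧
  T.edgeStab a b = H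

/-- Two `G`-trees are (`G`-equivariantly) isomorphic: there is a graph isomorphism
commuting with the `G`-actions. -/
def EquivIso {V₁ : Type v} {V₂ : Type w} (T₁ : GTree G V₁) (T₂ : GTree G V₂) : Prop :=
  ∃ f : T₁.graph ≃g T₂.graph, ∀ (g : G) (x : V₁), f (T₁.smul g x) = T₂.smul g (f x)

end GTree

/-- `Σ(X)`: the family of all translates of `X` and of its complement. -/
def TransSet {G : Type u} [Group G] (X : Set G) : Set (Set G) :=
  {A : Set G | ∃ g : G, A = g • X ∨ A = (g • X)ᶜ}

/-- A corner `C` of a pair `(A, B)` is small if it is `Stab(A)`-finite. -/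
def SmallCorner {G : Type u} [Group G] (A C : Set G) : Prop :=
  HFinite (MulAction.stabilizer G A) C

/-- At least two of four statements hold. -/
def TwoOfFour (P₁ P₂ P₃ P₄ : Prop) : Prop :=
  (P₁ ∧ P₂) ∨ (P₁ ∧ P₃) ∨ (P₁ ∧ P₄) ∨ (P₂ ∧ P₃) ∨ (P₂ ∧ P₄) ∨ (P₃ ∧ P₄)

/-- Almost inclusion: `A ≤ B` iff `A ∩ B*` is empty or is the only small corner of `(A, B)`. -/
def AILE {G : Type u} [Group G] (A B : Set G) : Prop :=
  A ∩ Bᶜ = ∅ ∨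
    (SmallCorner A (A ∩ Bᶜ) ∧ ¬ SmallCorner A (A ∩ B) ∧ ¬ SmallCorner A (Aᶜ ∩ B) ∧ ¬ SmallCorner A (Aᶜ ∩ Bᶜ))

/-- `A` crosses `B`: no corner of the pair `(A, B)` is small. -/
def AICrosses {G : Type u} [Group G] (A B : Set G) : Prop :=
  ¬ SmallCorner A (A ∩ B) ∧ ¬ SmallCorner A (A ∩ Bᶜ) ∧ ¬ SmallCorner A (Aᶜ ∩ B) ∧ ¬ SmallCorner A (Aᶜ ∩ Bᶜ)

/-- A finite family of almost invariant sets satisfies sandwiching. -/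
def Sandwiching {G : Type u} [Group G] {n : ℕ} (X : Fin n → Set G) : Prop :=
  ∀ j k : Fin n,
    (∃ A ∈ TransSet (X k), ∃ B ∈ TransSet (X k), AILE A (X j) ∧ AILE (X j) B) ∨
    ∀ A ∈ TransSet (X k), AICrosses (X j) A

/-- The splitting over `H` is a trivially ascending HNN extension: `H` is normal in `G`
and `G/H` is infinite cyclic. -/
def TrivAscHNN {G : Type u} [Group G] (H : Subgroup G) : Prop :=
  H.Normal ∧ ∃ t : G, (∀ g : G, ∃ n : ℤ, g * (t ^ n)⁻¹ ∈ H) ∧ ∀ n : ℤ, t ^ n ∈ H → n = 0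

/-- Two subsets are nested if one of the four inclusions among them and their
complements holds. -/
def Nested {G : Type u} (A B : Set G) : Prop :=
  A ⊆ B ∨ A ⊆ Bᶜ ∨ Aᶜ ⊆ B ∨ Aᶜ ⊆ Bᶜ

/-- `X` crosses `Y` with respect to the subgroup `L`: no corner of `(X, Y)` is `L`-finite. -/
def CrossesWrt {G : Type u} [Group G] (L : Subgroup G) (X Y : Set G) : Prop :=
  ¬ HFinite L (X ∩ Y) ∧ ¬ HFinite L (X ∩ Yᶜ) ∧ ¬ HFinite L (Xᶜ ∩ Y) ∧ ¬ HFinite L (Xᶜ ∩ Yᶜ)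

/-! ### Subsets that are finite over a subgroup -/

section Finiteness

variable {G : Type u} [Group G]

lemma hFinite_iff {H : Subgroup G} {S : Set G} :
    HFinite H S ↔ ∃ F : Finset G, ∀ x ∈ S, ∃ f ∈ F, x * f⁻¹ ∈ H := by
  have key : ∀ (F : Finset G) (x : G),
      x ∈ (⋃ g ∈ F, (H : Set G) * {g}) ↔ ∃ f ∈ F, x * f⁻¹ ∈ H := by
    intro F x
    simp
  constructor
  · rintro ⟨F, hF⟩
    exact ⟨F, fun x hx => (key F x).1 (hF hx)⟩
  · rintro ⟨F, hF⟩
    exact ⟨F, fun x hx => (key F x).2 (hF x hx)⟩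

lemma HFinite.mono {H : Subgroup G} {S T : Set G} (hT : HFinite H T) (h : S ⊆ T) :
    HFinite H S := by
  obtain ⟨F, hF⟩ := hT
  exact ⟨F, h.trans hF⟩

lemma hFinite_empty {H : Subgroup G} : HFinite H (∅ : Set G) := ⟨∅, by simp⟩

lemma HFinite.union {H : Subgroup G} {S T : Set G} (hS : HFinite H S) (hT : HFinite H T) :
    HFinite H (S ∪ T) := by
  classical
  rw [hFinite_iff] at *
  obtain ⟨F, hF⟩ := hS
  obtain ⟨F', hF'⟩ := hT
  refine ⟨F ∪ F', ?_⟩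
  rintro x (hx | hx)
  · obtain ⟨f, hf, h⟩ := hF x hx
    exact ⟨f, Finset.mem_union_left _ hf, h⟩
  · obtain ⟨f, hf, h⟩ := hF' x hx
    exact ⟨f, Finset.mem_union_right _ hf, h⟩

lemma hFinite_exists_mem {H : Subgroup G} (P : G → Set G) (hP : ∀ g, HFinite H (P g))
    (F : Finset G) : HFinite H {x | ∃ g ∈ F, x ∈ P g} := by
  classical
  induction F using Finset.induction_on with
  | empty => simpa using hFinite_empty
  | insert a s _ ih =>
    refine ((hP a).union ih).mono ?_
    rintro x ⟨g, hg, hx⟩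
    rcases Finset.mem_insert.1 hg with rfl | hg
    · exact Or.inl hx
    · exact Or.inr ⟨g, hg, hx⟩

lemma stabilizer_compl_eq (A : Set G) :
    MulAction.stabilizer G Aᶜ = MulAction.stabilizer G A := by
  ext g
  simp [MulAction.mem_stabilizer_iff]

lemma mul_mem_of_stab {A : Set G} {h x : G} (hh : h ∈ MulAction.stabilizer G A) :
    h * x ∈ A ↔ x ∈ A := by
  have : h • A = A := hh
  conv_lhs => rw [← this]
  rw [← smul_eq_mul, Set.smul_mem_smul_set_iff]

lemma HFinite.smul {A S : Set G} (g : G) (h : HFinite (MulAction.stabilizer G A) S) :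
    HFinite (MulAction.stabilizer G (g • A)) (g • S) := by
  classical
  rw [hFinite_iff] at *
  obtain ⟨F, hF⟩ := h
  refine ⟨F.image (fun f => g * f), ?_⟩
  rintro _ ⟨x, hx, rfl⟩
  obtain ⟨f, hf, hxf⟩ := hF x hx
  refine ⟨g * f, Finset.mem_image_of_mem _ hf, ?_⟩
  have h1 : (x * f⁻¹) • A = A := hxf
  rw [MulAction.mem_stabilizer_iff, smul_smul]
  have : g • x * (g * f)⁻¹ * g = g * (x * f⁻¹) := by
    simp [mul_assoc]
  rw [this, mul_smul, h1]

end Finiteness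

/-! ### Almost inclusion -/

section AlmostInclusion

variable {G : Type u} [Group G]

/-- One half of almost invariance of `A` over its own stabilizer: right translation by any `g`
moves only a `Stab(A)`-finite part of `A` out of `A`. -/
def RightStable (A : Set G) : Prop :=
  ∀ g : G, HFinite (MulAction.stabilizer G A) {x | x ∈ A ∧ x * g ∉ A}

/-- `A` is a nontrivial almost invariant set over its own stabilizer. -/
structure NontrivAI (A : Set G) : Prop where
  stable : RightStable A
  stable_compl : RightStable Aᶜ
  big : ¬ HFinite (MulAction.stabilizer G A) A
  big_compl : ¬ HFinite (MulAction.stabilizer G A) Aᶜ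

lemma NontrivAI.compl {A : Set G} (hA : NontrivAI A) : NontrivAI Aᶜ := by
  refine ⟨hA.stable_compl, ?_, ?_, ?_⟩
  · rw [compl_compl]; exact hA.stable
  · rw [stabilizer_compl_eq]; exact hA.big_compl
  · rw [stabilizer_compl_eq, compl_compl]; exact hA.big

lemma RightStable.finset {A : Set G} (hA : RightStable A) (F : Finset G) :
    HFinite (MulAction.stabilizer G A) {x | x ∈ A ∧ ∃ g ∈ F, x * g ∉ A} := by
  refine (hFinite_exists_mem _ hA F).mono ?_
  rintro x ⟨hx, g, hg, hxg⟩
  exact ⟨g, hg, hx, hxg⟩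

/-- Smallness of a corner does not depend on which of the two stabilizers is used. If
`A ∩ C ⊆ Stab(A) F` and `y ∈ A` lies outside `Stab(A) F`, then for `x = h f ∈ A ∩ C` the element
`h y = x (f⁻¹ y)` is in `A` but not in `Stab(A) F`, hence not in `C`; so all of `A ∩ C` is moved
out of `C` by one of the finitely many right translations by `f⁻¹ y`. -/
lemma small_symm {A C : Set G} (hA : ¬ HFinite (MulAction.stabilizer G A) A)
    (hC : RightStable C) (h : HFinite (MulAction.stabilizer G A) (A ∩ C)) :
    HFinite (MulAction.stabilizer G C) (A ∩ C) := by
  classical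
  rw [hFinite_iff] at h hA
  obtain ⟨F, hF⟩ := h
  push Not at hA
  obtain ⟨y, hyA, hy⟩ := hA F
  refine (hC.finset (F.image fun f => f⁻¹ * y)).mono ?_
  rintro x ⟨hxA, hxC⟩
  obtain ⟨f, hf, hxf⟩ := hF x ⟨hxA, hxC⟩
  refine ⟨hxC, f⁻¹ * y, Finset.mem_image_of_mem _ hf, fun hmem => ?_⟩
  rw [← mul_assoc] at hmem
  obtain ⟨f', hf', h'⟩ := hF _ ⟨(mul_mem_of_stab hxf).2 hyA, hmem⟩
  refine hy f' hf' ?_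
  have := mul_mem (inv_mem hxf) h'
  simpa [mul_assoc] using this

/-- `A` is almost contained in `B`: the corner `A ∩ B*` is small. -/
def AlmostSub (A B : Set G) : Prop := HFinite (MulAction.stabilizer G A) (A ∩ Bᶜ)

lemma AlmostSub.right {A B : Set G} (hA : NontrivAI A) (hB : NontrivAI B) (h : AlmostSub A B) :
    HFinite (MulAction.stabilizer G B) (A ∩ Bᶜ) := by
  have := small_symm hA.big hB.stable_compl h
  rwa [stabilizer_compl_eq] at this

lemma AlmostSub.compl {A B : Set G} (hA : NontrivAI A) (hB : NontrivAI B) (h : AlmostSub A B) :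
    AlmostSub Bᶜ Aᶜ := by
  unfold AlmostSub
  rw [stabilizer_compl_eq, compl_compl, Set.inter_comm]
  exact h.right hA hB

lemma almostSub_of_subset {A B : Set G} (h : A ⊆ B) : AlmostSub A B := by
  have : A ∩ Bᶜ = ∅ := by
    rw [← Set.sdiff_eq, Set.sdiff_eq_empty]; exact h
  unfold AlmostSub
  rw [this]
  exact hFinite_empty

/-- Almost inclusion is transitive. Write `D = C*` and `K = Stab(B)`. The set `A ∩ D` is contained
in `K F` for a finite set `F`, whereas `D` is not `K`-finite. Translating points `x = k f` of
`A ∩ D` by `f⁻¹ y` with `y ∉ K F` leaves `A` or leaves `D`; the first happens on a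
`Stab(A)`-finite set. On the remaining `Stab(D)`-finite set write also `x = l f₁` with
`l ∈ Stab(D)`; since `D = l D` is not contained in `K F`, one of finitely many right
translations moves `x` into `D` but outside `K F`, hence out of `A`. -/
lemma AlmostSub.trans {A B C : Set G} (hA : NontrivAI A) (hB : NontrivAI B) (hC : NontrivAI C)
    (h₁ : AlmostSub A B) (h₂ : AlmostSub B C) : AlmostSub A C := by
  classical
  set D : Set G := Cᶜ with hD
  have hDai : NontrivAI D := hC.compl
  have hK : HFinite (MulAction.stabilizer G B) (A ∩ D) := by
    refine ((h₁.right hA hB).union h₂).mono ?_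
    rintro x ⟨hxA, hxD⟩
    by_cases hxB : x ∈ B
    · exact Or.inr ⟨hxB, hxD⟩
    · exact Or.inl ⟨hxA, hxB⟩
  have hDK : ¬ HFinite (MulAction.stabilizer G B) D := by
    intro hfin
    refine hDai.big ?_
    have e1 : HFinite (MulAction.stabilizer G D) (Bᶜ ∩ D) := by
      refine small_symm hB.compl.big hDai.stable ?_
      rw [stabilizer_compl_eq]
      exact hfin.mono Set.inter_subset_right
    have e2 : HFinite (MulAction.stabilizer G D) (B ∩ D) :=
      small_symm hB.big hDai.stable h₂
    refine (e1.union e2).mono ?_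
    intro x hx
    by_cases hxB : x ∈ B
    · exact Or.inr ⟨hxB, hx⟩
    · exact Or.inl ⟨hxB, hx⟩
  obtain ⟨F, hF⟩ := hFinite_iff.1 hK
  rw [hFinite_iff] at hDK
  push Not at hDK
  obtain ⟨y, -, hy⟩ := hDK F
  have hP := hA.stable.finset (F.image fun f => f⁻¹ * y)
  have hQ := hDai.stable.finset (F.image fun f => f⁻¹ * y)
  obtain ⟨F₁, hF₁⟩ := hFinite_iff.1 hQ
  -- `z p` is a point of `D` which the pair `p = (f, f₁)` moves outside `K F`, if there is one.
  have hz : ∀ p : G × G, ∃ z : G, (∃ w ∈ D, ∀ f' ∈ F,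
      p.1 * p.2⁻¹ * w * f'⁻¹ ∉ MulAction.stabilizer G B) →
      z ∈ D ∧ ∀ f' ∈ F, p.1 * p.2⁻¹ * z * f'⁻¹ ∉ MulAction.stabilizer G B := by
    intro p
    by_cases h : ∃ w ∈ D, ∀ f' ∈ F, p.1 * p.2⁻¹ * w * f'⁻¹ ∉ MulAction.stabilizer G B
    · obtain ⟨w, hw⟩ := h
      exact ⟨w, fun _ => hw⟩
    · exact ⟨1, fun h' => (h h').elim⟩
  choose z hz using hz
  have hR := hA.stable.finset ((F ×ˢ F₁).image fun p => p.2⁻¹ * z p)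
  refine (hP.union hR).mono ?_
  rintro x ⟨hxA, hxD⟩
  obtain ⟨f, hf, hxf⟩ := hF x ⟨hxA, hxD⟩
  by_cases hcase : x * (f⁻¹ * y) ∈ A
  swap
  · exact Or.inl ⟨hxA, f⁻¹ * y, Finset.mem_image_of_mem _ hf, hcase⟩
  refine Or.inr ⟨hxA, ?_⟩
  have hxQ : x * (f⁻¹ * y) ∉ D := by
    intro hmem
    obtain ⟨f', hf', h'⟩ := hF _ ⟨hcase, hmem⟩
    refine hy f' hf' ?_
    have := mul_mem (inv_mem hxf) h'
    simpa [mul_assoc] using this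
  obtain ⟨f₁, hf₁, hxf₁⟩ := hF₁ x ⟨hxD, _, Finset.mem_image_of_mem _ hf, hxQ⟩
  have hex : ∃ w ∈ D, ∀ f' ∈ F, f * f₁⁻¹ * w * f'⁻¹ ∉ MulAction.stabilizer G B := by
    obtain ⟨w, hwD, hw⟩ := hDK F
    refine ⟨(x * f₁⁻¹)⁻¹ * w, (mul_mem_of_stab (inv_mem hxf₁)).2 hwD, fun f' hf' h' => ?_⟩
    refine hw f' hf' ?_
    have := mul_mem hxf h'
    simpa [mul_assoc] using this
  obtain ⟨hzD, hzF⟩ := hz (f, f₁) hex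
  refine ⟨f₁⁻¹ * z (f, f₁), Finset.mem_image.2 ⟨(f, f₁), by simp [hf, hf₁], rfl⟩, fun hmem => ?_⟩
  have hmemD : x * (f₁⁻¹ * z (f, f₁)) ∈ D := by
    rw [← mul_assoc]
    exact (mul_mem_of_stab hxf₁).2 hzD
  obtain ⟨f', hf', h'⟩ := hF _ ⟨hmem, hmemD⟩
  refine hzF f' hf' ?_
  have := mul_mem (inv_mem hxf) h'
  simpa [mul_assoc] using this

/-- Since `A` and `B*` are not small, the only corner that can be small together with `A ∩ B*` is
`A* ∩ B`. Hence `A ≤ B` means inclusion or strict almost inclusion. -/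
lemma aile_iff {A B : Set G} (hA : NontrivAI A) (hB : NontrivAI B) :
    AILE A B ↔ A ⊆ B ∨ (AlmostSub A B ∧ ¬ AlmostSub B A) := by
  have he : A ∩ Bᶜ = ∅ ↔ A ⊆ B := by rw [← Set.sdiff_eq, Set.sdiff_eq_empty]
  unfold AILE
  rw [he]
  refine or_congr_right ⟨?_, ?_⟩
  · rintro ⟨h1, -, h3, -⟩
    refine ⟨h1, fun h => h3 ?_⟩
    have := h.right hB hA
    rwa [Set.inter_comm] at this
  · rintro ⟨h1, h2⟩
    refine ⟨h1, fun h => hA.big ?_, fun h => h2 ?_, fun h => hB.compl.big ?_⟩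
    · exact (HFinite.union h h1).mono (by rw [Set.inter_union_compl])
    · have h' : AlmostSub Aᶜ Bᶜ := by
        unfold AlmostSub
        rw [stabilizer_compl_eq, compl_compl]
        exact h
      have := h'.compl hA.compl hB.compl
      simpa using this
    · have h' : AlmostSub Aᶜ B := by
        unfold AlmostSub
        rw [stabilizer_compl_eq]
        exact h
      have e1 := h'.right hA.compl hB
      have e2 := h1.right hA hB
      rw [stabilizer_compl_eq]
      refine (e1.union e2).mono ?_
      intro x hx
      by_cases hxA : x ∈ A
      · exact Or.inr ⟨hxA, hx⟩
      · exact Or.inl ⟨hxA, hx⟩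

lemma AILE.almostSub {A B : Set G} (hA : NontrivAI A) (hB : NontrivAI B) (h : AILE A B) :
    AlmostSub A B := by
  rcases (aile_iff hA hB).1 h with h | h
  · exact almostSub_of_subset h
  · exact h.1

lemma AILE.trans {A B C : Set G} (hA : NontrivAI A) (hB : NontrivAI B) (hC : NontrivAI C)
    (h₁ : AILE A B) (h₂ : AILE B C) : AILE A C := by
  have s₁ := h₁.almostSub hA hB
  have s₂ := h₂.almostSub hB hC
  rw [aile_iff hA hC]
  rcases (aile_iff hA hB).1 h₁ with i₁ | i₁
  · rcases (aile_iff hB hC).1 h₂ with i₂ | i₂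
    · exact Or.inl (i₁.trans i₂)
    · exact Or.inr ⟨s₁.trans hA hB hC s₂, fun h => i₂.2 (h.trans hC hA hB s₁)⟩
  · exact Or.inr ⟨s₁.trans hA hB hC s₂, fun h => i₁.2 (s₂.trans hB hC hA h)⟩

lemma AILE.antisymm {A B : Set G} (hA : NontrivAI A) (hB : NontrivAI B)
    (h₁ : AILE A B) (h₂ : AILE B A) : A = B := by
  have s₁ := h₁.almostSub hA hB
  have s₂ := h₂.almostSub hB hA
  rcases (aile_iff hA hB).1 h₁ with i₁ | i₁
  · rcases (aile_iff hB hA).1 h₂ with i₂ | i₂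
    · exact i₁.antisymm i₂
    · exact (i₂.2 s₁).elim
  · exact (i₁.2 s₂).elim

lemma AILE.compl {A B : Set G} (hA : NontrivAI A) (hB : NontrivAI B) (h : AILE A B) :
    AILE Bᶜ Aᶜ := by
  rw [aile_iff hB.compl hA.compl]
  rcases (aile_iff hA hB).1 h with h | h
  · exact Or.inl (Set.compl_subset_compl.2 h)
  · refine Or.inr ⟨h.1.compl hA hB, fun h' => h.2 ?_⟩
    have := h'.compl hA.compl hB.compl
    simpa using this

lemma aile_of_subset {A B : Set G} (h : A ⊆ B) : AILE A B :=
  Or.inl (by rw [← Set.sdiff_eq, Set.sdiff_eq_empty]; exact h)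

lemma smallCorner_smul {A C : Set G} (g : G) :
    SmallCorner (g • A) (g • C) ↔ SmallCorner A C := by
  refine ⟨fun h => ?_, fun h => HFinite.smul g h⟩
  have := HFinite.smul g⁻¹ h
  simpa [SmallCorner] using this

lemma AILE.smul {A B : Set G} (g : G) (h : AILE A B) : AILE (g • A) (g • B) := by
  unfold AILE at *
  simp only [← Set.smul_set_compl, ← Set.smul_set_inter, smallCorner_smul,
    Set.smul_set_eq_empty]
  exact h

end AlmostInclusion

/-! ### Discrete nested families of translates -/

section TreeLike

variable {G : Type u} [Group G]

lemma self_mem_transSet (X : Set G) : X ∈ TransSet X := ⟨1, Or.inl (by simp)⟩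

lemma compl_mem_transSet {X A : Set G} (h : A ∈ TransSet X) : Aᶜ ∈ TransSet X := by
  obtain ⟨g, rfl | rfl⟩ := h
  · exact ⟨g, Or.inr rfl⟩
  · exact ⟨g, Or.inl (compl_compl _)⟩

lemma smul_mem_transSet {X A : Set G} (g : G) (h : A ∈ TransSet X) : g • A ∈ TransSet X := by
  obtain ⟨k, rfl | rfl⟩ := h
  · exact ⟨g * k, Or.inl (by rw [mul_smul])⟩
  · exact ⟨g * k, Or.inr (by rw [mul_smul, Set.smul_set_compl])⟩

/-- The properties of the family `Σ(X)` of a splitting that the argument uses: its members are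
pairwise nested, only finitely many of them separate two given elements of `G`, and each of them
properly contains another one (so that all of them are nonempty). -/
structure TreeLike (X : Set G) : Prop where
  nested : ∀ A ∈ TransSet X, ∀ B ∈ TransSet X, Nested A B
  sep : ∀ x y : G, {A | A ∈ TransSet X ∧ x ∈ A ∧ y ∉ A}.Finite
  desc : ∀ A ∈ TransSet X, ∃ A' ∈ TransSet X, A' ⊂ A

namespace TreeLike

variable {X : Set G}

lemma nonempty (hX : TreeLike X) {A : Set G} (hA : A ∈ TransSet X) : A.Nonempty := by
  obtain ⟨A', -, h⟩ := hX.desc A hA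
  obtain ⟨x, hx, -⟩ := Set.exists_of_ssubset h
  exact ⟨x, hx⟩

lemma finite_interval (hX : TreeLike X) {C E : Set G} (hC : C ∈ TransSet X)
    (hE : E ∈ TransSet X) : {A | A ∈ TransSet X ∧ C ⊆ A ∧ A ⊆ E}.Finite := by
  obtain ⟨x, hx⟩ := hX.nonempty hC
  obtain ⟨y, hy⟩ := hX.nonempty (compl_mem_transSet hE)
  refine (hX.sep x y).subset ?_
  rintro A ⟨hA, h1, h2⟩
  exact ⟨hA, h1 hx, fun h => hy (h2 h)⟩

/-- If `x ∈ A` and `x g ∉ A` then `x⁻¹ A` is one of the finitely many members of `Σ(X)` separating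
`1` from `g`, and it determines the coset `Stab(A) x`. -/
lemma rightStable (hX : TreeLike X) {A : Set G} (hA : A ∈ TransSet X) : RightStable A := by
  classical
  intro g
  have hfin := hX.sep 1 g
  rw [hFinite_iff]
  have hr : ∀ B : Set G, ∃ r : G, (∃ x : G, x⁻¹ • A = B) → r⁻¹ • A = B := by
    intro B
    by_cases h : ∃ x : G, x⁻¹ • A = B
    · obtain ⟨x, hx⟩ := h
      exact ⟨x, fun _ => hx⟩
    · exact ⟨1, fun h' => (h h').elim⟩
  choose r hr using hr
  refine ⟨hfin.toFinset.image r, ?_⟩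
  rintro x ⟨hx, hxg⟩
  have hmem : x⁻¹ • A ∈ hfin.toFinset := by
    rw [Set.Finite.mem_toFinset]
    refine ⟨smul_mem_transSet _ hA, ?_, ?_⟩
    · rw [Set.mem_inv_smul_set_iff]; simpa using hx
    · rw [Set.mem_inv_smul_set_iff]; simpa using hxg
  refine ⟨r (x⁻¹ • A), Finset.mem_image_of_mem _ hmem, ?_⟩
  have h := hr (x⁻¹ • A) ⟨x, rfl⟩
  rw [MulAction.mem_stabilizer_iff, mul_smul, h, smul_inv_smul]

lemma exists_chain (hX : TreeLike X) {A : Set G} (hA : A ∈ TransSet X) (n : ℕ) :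
    ∃ s : Finset (Set G), n ≤ s.card ∧ ∃ D ∈ TransSet X, D ⊆ A ∧
      ∀ B ∈ s, B ∈ TransSet X ∧ D ⊂ B ∧ B ⊆ A := by
  classical
  induction n with
  | zero => exact ⟨∅, by simp, A, hA, subset_rfl, by simp⟩
  | succ n ih =>
    obtain ⟨s, hs, D, hD, hDA, h⟩ := ih
    obtain ⟨D', hD', hlt⟩ := hX.desc D hD
    refine ⟨insert D s, ?_, D', hD', hlt.subset.trans hDA, ?_⟩
    · rw [Finset.card_insert_of_notMem]
      · omega
      · exact fun hmem => (h D hmem).2.1.ne rfl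
    · intro B hB
      rcases Finset.mem_insert.1 hB with rfl | hB
      · exact ⟨hD, hlt, hDA⟩
      · exact ⟨(h B hB).1, hlt.trans (h B hB).2.1, (h B hB).2.2⟩

/-- The number of members of `Σ(X)` between a point `x` and `A` depends only on the coset
`Stab(A) x`, and it is unbounded on `A` because `A` contains arbitrarily long chains. -/
lemma not_hFinite (hX : TreeLike X) {A : Set G} (hA : A ∈ TransSet X) :
    ¬ HFinite (MulAction.stabilizer G A) A := by
  classical
  intro hfin
  obtain ⟨F, hF⟩ := hFinite_iff.1 hfin
  set S : G → Set (Set G) := fun x => {B | B ∈ TransSet X ∧ x ∈ B ∧ B ⊆ A} with hS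
  have hSfin : ∀ x, (S x).Finite := by
    intro x
    obtain ⟨y, hy⟩ := hX.nonempty (compl_mem_transSet hA)
    refine (hX.sep x y).subset ?_
    rintro B ⟨hB, hxB, hBA⟩
    exact ⟨hB, hxB, fun h => hy (hBA h)⟩
  have hinv : ∀ x f : G, x * f⁻¹ ∈ MulAction.stabilizer G A → (S x).ncard ≤ (S f).ncard := by
    intro x f h
    refine Set.ncard_le_ncard_of_injOn (fun B => (x * f⁻¹)⁻¹ • B) ?_ ?_ (hSfin f)
    · rintro B ⟨hB, hxB, hBA⟩
      refine ⟨smul_mem_transSet _ hB, ?_, ?_⟩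
      · rw [Set.mem_inv_smul_set_iff]; simpa using hxB
      · have h' : (x * f⁻¹)⁻¹ • A = A := inv_mem h
        rw [← h']
        exact Set.smul_set_mono hBA
    · intro B _ B' _ h
      exact smul_left_cancel _ h
  obtain ⟨s, hs, D, hD, hDA, hmem⟩ := hX.exists_chain hA (F.sup (fun f => (S f).ncard) + 1)
  obtain ⟨x, hx⟩ := hX.nonempty hD
  obtain ⟨f, hf, hxf⟩ := hF x (hDA hx)
  have h1 := hinv x f hxf
  have h2 : (S f).ncard ≤ F.sup (fun f => (S f).ncard) :=
    Finset.le_sup (f := fun f => (S f).ncard) hf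
  have h3 : s.card ≤ (S x).ncard := by
    rw [← Set.ncard_coe_finset]
    refine Set.ncard_le_ncard ?_ (hSfin x)
    intro B hB
    obtain ⟨hB1, hB2, hB3⟩ := hmem B hB
    exact ⟨hB1, hB2.subset hx, hB3⟩
  omega

lemma nontrivAI (hX : TreeLike X) {A : Set G} (hA : A ∈ TransSet X) : NontrivAI A := by
  refine ⟨hX.rightStable hA, hX.rightStable (compl_mem_transSet hA), hX.not_hFinite hA, ?_⟩
  have := hX.not_hFinite (compl_mem_transSet hA)
  rwa [stabilizer_compl_eq] at this

/-- Inside a nested family the order `≤` is plain inclusion. -/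
lemma subset_of_aile (hX : TreeLike X) {A B : Set G} (hA : A ∈ TransSet X)
    (hB : B ∈ TransSet X) (h : AILE A B) : A ⊆ B := by
  have nA := hX.nontrivAI hA
  have nB := hX.nontrivAI hB
  rcases (aile_iff nA nB).1 h with h | ⟨h1, h2⟩
  · exact h
  rcases hX.nested A hA B hB with h | h | h | h
  · exact h
  · exact (nA.big (h1.mono fun x hx => ⟨hx, h hx⟩)).elim
  · refine (nB.big_compl ((h1.right nA nB).mono fun x hx => ⟨?_, hx⟩)).elim
    by_contra hxA
    exact hx (h hxA)
  · exact (h2 (almostSub_of_subset (Set.compl_subset_compl.1 h))).elim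

/-- A partial choice `U` of members of `Σ(X)` that is upward closed and contains no complementary
pair extends, when some pair `{B, B*}` is undecided, to the ultrafilter of a vertex incident to
the edge `B`: the sets containing `B` or properly containing `B*`. -/
lemma exists_vertex (hX : TreeLike X) {U : Set (Set G)} (hU : U ⊆ TransSet X)
    (hup : ∀ A ∈ U, ∀ B ∈ TransSet X, A ⊆ B → B ∈ U)
    {B : Set G} (hB : B ∈ TransSet X) (hBU : B ∉ U) (hBU' : Bᶜ ∉ U) :
    ∃ P : Set (Set G), P ⊆ TransSet X ∧ U ⊆ P ∧
      (∀ A ∈ TransSet X, (A ∈ P ↔ Aᶜ ∉ P)) ∧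
      (∀ A ∈ P, ∀ B ∈ TransSet X, A ⊆ B → B ∈ P) ∧
      ∀ E ∈ TransSet X, {A | A ∈ P ∧ A ⊆ E}.Finite := by
  have hB' := compl_mem_transSet hB
  refine ⟨{A | A ∈ TransSet X ∧ (B ⊆ A ∨ Bᶜ ⊂ A)}, fun A h => h.1, ?_, ?_, ?_, ?_⟩
  · intro A hA
    refine ⟨hU hA, ?_⟩
    rcases hX.nested A (hU hA) B hB with h | h | h | h
    · exact (hBU (hup A hA B hB h)).elim
    · exact (hBU' (hup A hA _ hB' h)).elim
    · refine Or.inr (LE.le.ssubset_of_ne (Set.compl_subset_comm.1 h) ?_)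
      rintro rfl
      exact hBU' hA
    · exact Or.inl (Set.compl_subset_compl.1 h)
  · intro A hA
    obtain ⟨x, hx⟩ := hX.nonempty hB
    obtain ⟨y, hy⟩ := hX.nonempty hB'
    constructor
    · rintro ⟨-, h1⟩ ⟨-, h2⟩
      rcases h1 with h1 | h1 <;> rcases h2 with h2 | h2
      · exact h2 hx (h1 hx)
      · exact (compl_lt_compl_iff_lt.1 h2).not_subset h1
      · rw [← compl_compl A] at h1
        exact (compl_lt_compl_iff_lt.1 h1).not_subset h2
      · exact h2.subset hy (h1.subset hy)
    · intro h
      have h' : ¬ (B ⊆ Aᶜ ∨ Bᶜ ⊂ Aᶜ) := fun h' => h ⟨compl_mem_transSet hA, h'⟩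
      push Not at h'
      refine ⟨hA, ?_⟩
      rcases hX.nested A hA B hB with h1 | h1 | h1 | h1
      · by_cases he : A = B
        · exact Or.inl he.ge
        · refine (h'.2 (compl_lt_compl_iff_lt.2 ?_)).elim
          exact LE.le.ssubset_of_ne h1 he
      · exact (h'.1 (Set.subset_compl_comm.1 h1)).elim
      · refine Or.inr (LE.le.ssubset_of_ne (Set.compl_subset_comm.1 h1) ?_)
        rintro rfl
        exact h'.1 (by simp)
      · exact Or.inl (Set.compl_subset_compl.1 h1)
  · rintro A ⟨-, h⟩ C hC hAC
    exact ⟨hC, h.imp (fun h => h.trans hAC) (fun h => h.trans_subset hAC)⟩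
  · intro E hE
    refine ((hX.finite_interval hB hE).union (hX.finite_interval hB' hE)).subset ?_
    rintro A ⟨⟨hA, h⟩, hAE⟩
    exact h.imp (fun h => ⟨hA, h, hAE⟩) (fun h => ⟨hA, h.subset, hAE⟩)

end TreeLike

end TreeLike

/-! ### The family of a splitting -/

namespace GTree

variable {G : Type u} [Group G] {V : Type v} (T : GTree G V)

lemma smul_inv_smul (g : G) (x : V) : T.smul g (T.smul g⁻¹ x) = x := by
  rw [← T.smul_mul, mul_inv_cancel, T.smul_one]

lemma inv_smul_smul (g : G) (x : V) : T.smul g⁻¹ (T.smul g x) = x := by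
  rw [← T.smul_mul, inv_mul_cancel, T.smul_one]

lemma smul_inj {g : G} {x y : V} (h : T.smul g x = T.smul g y) : x = y := by
  rw [← T.inv_smul_smul g x, h, T.inv_smul_smul]

lemma reachable_delete_smul {c d x y : V} (g : G)
    (h : (T.graph.deleteEdges {s(c, d)}).Reachable x y) :
    (T.graph.deleteEdges {s(T.smul g c, T.smul g d)}).Reachable (T.smul g x) (T.smul g y) := by
  rw [SimpleGraph.reachable_iff_reflTransGen] at h
  induction h with
  | refl => exact SimpleGraph.Reachable.refl _
  | tail _ hadj ih =>
    refine ih.trans (SimpleGraph.Adj.reachable ?_)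
    rw [SimpleGraph.deleteEdges_adj] at hadj ⊢
    refine ⟨T.adj_smul g _ _ hadj.1, fun h => hadj.2 ?_⟩
    simp only [Set.mem_singleton_iff, Sym2.eq_iff] at h ⊢
    exact h.imp (fun h => ⟨T.smul_inj h.1, T.smul_inj h.2⟩)
      (fun h => ⟨T.smul_inj h.1, T.smul_inj h.2⟩)

lemma smul_mem_side {c d x : V} (g : G) :
    T.smul g x ∈ T.side (T.smul g c) (T.smul g d) ↔ x ∈ T.side c d := by
  refine ⟨fun h => ?_, fun h => T.reachable_delete_smul g h⟩
  have := T.reachable_delete_smul g⁻¹ h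
  simp only [T.inv_smul_smul] at this
  exact this

lemma left_mem_side (c d : V) : c ∈ T.side c d := SimpleGraph.Reachable.refl _

lemma right_notMem_side {c d : V} (h : T.graph.Adj c d) : d ∉ T.side c d := by
  have hb := SimpleGraph.isAcyclic_iff_forall_adj_isBridge.1 T.acyclic h
  exact (SimpleGraph.isBridge_iff.1 hb)

lemma mem_side_or (c d x : V) : x ∈ T.side c d ∨ x ∈ T.side d c := by
  have h := T.connected.preconnected c x
  rw [SimpleGraph.reachable_iff_reflTransGen] at h
  induction h with
  | refl => exact Or.inl (T.left_mem_side c d)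
  | @tail u w _ hadj ih =>
    by_cases he : s(u, w) = s(c, d)
    · rcases Sym2.eq_iff.1 he with ⟨-, rfl⟩ | ⟨-, rfl⟩
      · exact Or.inr (T.left_mem_side _ _)
      · exact Or.inl (T.left_mem_side _ _)
    · refine ih.imp (fun h => h.trans (SimpleGraph.Adj.reachable ?_))
        (fun h => h.trans (SimpleGraph.Adj.reachable ?_))
      · rw [SimpleGraph.deleteEdges_adj]
        exact ⟨hadj, he⟩
      · rw [SimpleGraph.deleteEdges_adj, Sym2.eq_swap (a := d)]
        exact ⟨hadj, he⟩

lemma compl_side {c d : V} (h : T.graph.Adj c d) : (T.side c d)ᶜ = T.side d c := by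
  ext x
  refine ⟨fun hx => (T.mem_side_or c d x).resolve_left hx, fun hx hx' => ?_⟩
  refine T.right_notMem_side h (SimpleGraph.Reachable.trans hx' ?_)
  have : (T.graph.deleteEdges {s(d, c)}).Reachable d x := hx
  rw [Sym2.eq_swap] at this
  exact this.symm

/-- A walk that stays on the `p`-side of `(p, q)` does not use an edge with an endpoint off
that side. -/
lemma reachable_of_notMem_side {p q z z' x : V} (hz : z ∉ T.side p q) (hx : x ∈ T.side p q) :
    (T.graph.deleteEdges {s(z, z')}).Reachable p x := by
  have h : (T.graph.deleteEdges {s(p, q)}).Reachable p x := hx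
  clear hx
  rw [SimpleGraph.reachable_iff_reflTransGen] at h
  induction h with
  | refl => exact SimpleGraph.Reachable.refl _
  | @tail u w hu hadj ih =>
    refine ih.trans (SimpleGraph.Adj.reachable ?_)
    rw [← SimpleGraph.reachable_iff_reflTransGen] at hu
    have hw := hu.trans (SimpleGraph.Adj.reachable hadj)
    rw [SimpleGraph.deleteEdges_adj] at hadj ⊢
    refine ⟨hadj.1, fun h => ?_⟩
    rcases Sym2.eq_iff.1 h with ⟨rfl, -⟩ | ⟨-, rfl⟩
    · exact hz hu
    · exact hz hw

lemma side_subset_side {p q z z' : V} (hz : z ∉ T.side p q) (hp : p ∈ T.side z z') :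
    T.side p q ⊆ T.side z z' :=
  fun _ hx => SimpleGraph.Reachable.trans hp (T.reachable_of_notMem_side hz hx)

/-- Two distinct edges: each lies entirely on one side of the other, and the sides facing away
from each other are disjoint. -/
lemma side_nested {c d c' d' : V} (h : T.graph.Adj c d) (h' : T.graph.Adj c' d') :
    T.side c d ⊆ T.side c' d' ∨ T.side c d ⊆ T.side d' c' ∨
      T.side d c ⊆ T.side c' d' ∨ T.side d c ⊆ T.side d' c' := by
  have hdec := fun x => T.mem_side_or c' d' x
  by_cases h1 : c' ∈ T.side c d
  · have h2 : c' ∉ T.side d c := by rw [← T.compl_side h]; exact fun h => h h1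
    rcases hdec d with h3 | h3
    · exact Or.inr (Or.inr (Or.inl (T.side_subset_side h2 h3)))
    · by_cases h4 : d' ∈ T.side d c
      · -- the two edges coincide: `c'` and `d'` are on different sides of `(c, d)`
        have he : s(c', d') = s(c, d) := by
          by_contra hne
          rw [← T.compl_side h] at h4
          refine h4 (SimpleGraph.Reachable.trans h1 (SimpleGraph.Adj.reachable ?_))
          rw [SimpleGraph.deleteEdges_adj]
          exact ⟨h', hne⟩
        rcases Sym2.eq_iff.1 he with ⟨rfl, rfl⟩ | ⟨rfl, rfl⟩
        · exact Or.inl subset_rfl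
        · exact Or.inr (Or.inl subset_rfl)
      · exact Or.inr (Or.inr (Or.inr (T.side_subset_side h4 h3)))
  · rcases hdec c with h3 | h3
    · exact Or.inl (T.side_subset_side h1 h3)
    · by_cases h4 : d' ∈ T.side c d
      · have he : s(c', d') = s(c, d) := by
          by_contra hne
          refine h1 (SimpleGraph.Reachable.trans h4 (SimpleGraph.Adj.reachable ?_))
          rw [SimpleGraph.deleteEdges_adj, Sym2.eq_swap (a := d')]
          exact ⟨h'.symm, hne⟩
        rcases Sym2.eq_iff.1 he with ⟨rfl, rfl⟩ | ⟨rfl, rfl⟩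
        · exact Or.inl subset_rfl
        · exact Or.inr (Or.inl subset_rfl)
      · exact Or.inr (Or.inl (T.side_subset_side h4 h3))

/-- Only the edges of a walk from `p` to `q` can separate `p` from `q`. -/
lemma finite_separating (p q : V) :
    {e : V × V | p ∈ T.side e.1 e.2 ∧ q ∉ T.side e.1 e.2}.Finite := by
  obtain ⟨w⟩ := T.connected.preconnected p q
  refine ((List.finite_toSet w.support).prod (List.finite_toSet w.support)).subset ?_
  rintro ⟨c, d⟩ ⟨hp, hq⟩
  have hmem : s(c, d) ∈ w.edges := by
    by_contra hne
    refine hq (SimpleGraph.Reachable.trans hp ⟨w.toDeleteEdges {s(c, d)} ?_⟩)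
    rintro e he rfl
    exact hne he
  exact ⟨w.fst_mem_support_of_mem_edges hmem, w.snd_mem_support_of_mem_edges hmem⟩

variable {T} {a b : V} {H : Subgroup G}

lemma IsSplitting.exists_smul (hs : T.IsSplitting a b H) {c d c' d' : V} (h : T.graph.Adj c d)
    (h' : T.graph.Adj c' d') :
    ∃ g : G, (T.smul g c = c' ∧ T.smul g d = d') ∨ (T.smul g c = d' ∧ T.smul g d = c') := by
  obtain ⟨g, hg⟩ := hs.2.2.1 c d h
  obtain ⟨k, hk⟩ := hs.2.2.1 c' d' h'
  refine ⟨k * g⁻¹, ?_⟩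
  rcases hg with ⟨rfl, rfl⟩ | ⟨rfl, rfl⟩ <;> rcases hk with ⟨rfl, rfl⟩ | ⟨rfl, rfl⟩ <;>
    simp [T.smul_mul, T.inv_smul_smul]

lemma IsSplitting.exists_smul_vertex (hs : T.IsSplitting a b H) {c d : V}
    (h : T.graph.Adj c d) (x : V) : ∃ g : G, T.smul g x = c ∨ T.smul g x = d := by
  have hy : ∃ y, T.graph.Adj x y := by
    have : Nontrivial V := ⟨⟨c, d, h.ne⟩⟩
    exact T.connected.preconnected.exists_adj_of_nontrivial x
  obtain ⟨y, hy⟩ := hy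
  obtain ⟨g, hg⟩ := hs.exists_smul hy h
  exact ⟨g, hg.imp And.left And.left⟩

/-- The tree of a splitting has no leaves: if `d` were the only neighbour of `c`, then by edge
transitivity the tree would be a star with centre `d`, and `d` would be fixed by `G`. -/
lemma IsSplitting.exists_adj_ne (hs : T.IsSplitting a b H) {c d : V} (h : T.graph.Adj c d) :
    ∃ c₂, T.graph.Adj c c₂ ∧ c₂ ≠ d := by
  by_contra hcon
  push Not at hcon
  have hleaf : ∀ (g : G) (y : V), T.graph.Adj (T.smul g c) y → y = T.smul g d := by
    intro g y hy
    have := T.adj_smul g⁻¹ _ _ hy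
    rw [T.inv_smul_smul] at this
    rw [← hcon _ this, T.smul_inv_smul]
  have hnbr : ∀ y, T.graph.Adj d y → ∃ g, T.smul g c = y ∧ T.smul g d = d := by
    intro y hy
    obtain ⟨g, ⟨h1, h2⟩ | ⟨h1, h2⟩⟩ := hs.exists_smul h hy
    · have hc : c = y := by
        rw [← h2]
        exact hleaf g c (by rw [h1]; exact h.symm)
      exact ⟨1, by rw [T.smul_one, hc], T.smul_one d⟩
    · exact ⟨g, h1, h2⟩
  have hstar : ∀ x, x = d ∨ T.graph.Adj d x := by
    intro x
    have hx := T.connected.preconnected d x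
    rw [SimpleGraph.reachable_iff_reflTransGen] at hx
    induction hx with
    | refl => exact Or.inl rfl
    | @tail u w _ hadj ih =>
      rcases ih with rfl | ih
      · exact Or.inr hadj
      · obtain ⟨g, rfl, h2⟩ := hnbr u ih
        exact Or.inl ((hleaf g w hadj).trans h2)
  obtain ⟨g, hg⟩ := hs.2.1 d
  rcases hstar (T.smul g d) with h1 | h1
  · exact hg h1
  · -- here `g` carries `d` to a leaf, so `d` itself is a leaf and `g` inverts the edge `{c, d}`
    obtain ⟨k, hk, hkd⟩ := hnbr _ h1
    have h2 : T.smul g c = d := by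
      have := hleaf k (T.smul g c) (by rw [hk]; exact (T.adj_smul g _ _ h).symm)
      rw [this, hkd]
    have h3 : c = T.smul g d := hleaf g c (by rw [h2]; exact h.symm)
    exact T.no_inversion g c d h ⟨h2, h3.symm⟩

lemma smul_standardSet (g : G) (c d v : V) :
    g • T.standardSet c d v = T.standardSet (T.smul g c) (T.smul g d) v := by
  ext x
  rw [Set.mem_smul_set_iff_inv_smul_mem]
  change T.smul (g⁻¹ * x) v ∈ T.side c d ↔ T.smul x v ∈ T.side (T.smul g c) (T.smul g d)
  rw [← T.smul_mem_side g, ← T.smul_mul, mul_inv_cancel_left]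

lemma compl_standardSet {c d : V} (h : T.graph.Adj c d) (v : V) :
    (T.standardSet c d v)ᶜ = T.standardSet d c v := by
  ext x
  change T.smul x v ∈ (T.side c d)ᶜ ↔ _
  rw [T.compl_side h]
  rfl

lemma IsSplitting.mem_transSet_iff (hs : T.IsSplitting a b H) (v : V) (A : Set G) :
    A ∈ TransSet (T.standardSet a b v) ↔
      ∃ c d, T.graph.Adj c d ∧ A = T.standardSet c d v := by
  constructor
  · rintro ⟨g, rfl | rfl⟩
    · exact ⟨_, _, T.adj_smul g _ _ hs.1, smul_standardSet g a b v⟩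
    · refine ⟨_, _, (T.adj_smul g _ _ hs.1).symm, ?_⟩
      rw [smul_standardSet, compl_standardSet (T.adj_smul g _ _ hs.1)]
  · rintro ⟨c, d, h, rfl⟩
    obtain ⟨g, ⟨rfl, rfl⟩ | ⟨rfl, rfl⟩⟩ := hs.2.2.1 c d h
    · exact ⟨g, Or.inl (smul_standardSet g a b v).symm⟩
    · exact ⟨g, Or.inr (by rw [smul_standardSet, compl_standardSet h.symm])⟩

lemma standardSet_mono {c d c' d' : V} (v : V) (h : T.side c d ⊆ T.side c' d') :
    T.standardSet c d v ⊆ T.standardSet c' d' v := fun _ hx => h hx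

lemma IsSplitting.treeLike (hs : T.IsSplitting a b H) (v : V) :
    TreeLike (T.standardSet a b v) := by
  refine ⟨?_, ?_, ?_⟩
  · intro A hA B hB
    obtain ⟨c, d, h, rfl⟩ := (hs.mem_transSet_iff v A).1 hA
    obtain ⟨c', d', h', rfl⟩ := (hs.mem_transSet_iff v B).1 hB
    unfold Nested
    rw [compl_standardSet h, compl_standardSet h']
    exact (T.side_nested h h').imp (standardSet_mono v) (Or.imp (standardSet_mono v)
      (Or.imp (standardSet_mono v) (standardSet_mono v)))
  · intro x y
    refine ((T.finite_separating (T.smul x v) (T.smul y v)).image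
      (fun e => T.standardSet e.1 e.2 v)).subset ?_
    rintro A ⟨hA, hx, hy⟩
    obtain ⟨c, d, h, rfl⟩ := (hs.mem_transSet_iff v A).1 hA
    exact ⟨(c, d), ⟨hx, hy⟩, rfl⟩
  · intro A hA
    obtain ⟨c, d, h, rfl⟩ := (hs.mem_transSet_iff v A).1 hA
    -- two steps into the half-tree: both ends of the edge `{c, c₂}` are lost, and one of
    -- them is a translate of `v`
    obtain ⟨c₂, h₂, hne₂⟩ := hs.exists_adj_ne h
    obtain ⟨c₃, h₃, hne₃⟩ := hs.exists_adj_ne h₂.symm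
    have step : ∀ {p q r : V}, T.graph.Adj p q → T.graph.Adj p r → r ≠ q →
        T.side r p ⊆ T.side p q := by
      intro p q r hpq hpr hne
      refine T.side_subset_side (T.right_notMem_side hpr.symm) (SimpleGraph.Adj.reachable ?_)
      rw [SimpleGraph.deleteEdges_adj]
      refine ⟨hpr, fun he => ?_⟩
      rcases Sym2.eq_iff.1 he with ⟨-, he⟩ | ⟨he, -⟩
      · exact hne he
      · exact hpq.ne he
    have s₂ := step h h₂ hne₂
    have s₃ := step h₂.symm h₃ hne₃
    refine ⟨T.standardSet c₃ c₂ v, (hs.mem_transSet_iff v _).2 ⟨c₃, c₂, h₃.symm, rfl⟩,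
      (Set.ssubset_iff_of_subset (standardSet_mono v (s₃.trans s₂))).2 ?_⟩
    obtain ⟨g, hg⟩ := hs.exists_smul_vertex h₂ v
    refine ⟨g, ?_, ?_⟩
    · change T.smul g v ∈ T.side c d
      rcases hg with hg | hg
      · rw [hg]; exact T.left_mem_side c d
      · rw [hg]; exact s₂ (T.left_mem_side c₂ c)
    · change T.smul g v ∉ T.side c₃ c₂
      rcases hg with hg | hg
      · rw [hg]
        exact fun hmem => T.right_notMem_side h₂.symm (s₃ hmem)
      · rw [hg]
        exact T.right_notMem_side h₃.symm

end GTree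

/-! ### Construction of the ultrafilter -/

section Construction

variable {G : Type u} [Group G] {n : ℕ} {X : Fin n → Set G}

lemma not_crosses_of_almostSub {A B : Set G}
    (h : AlmostSub A B ∨ AlmostSub A Bᶜ ∨ AlmostSub Aᶜ B ∨ AlmostSub Aᶜ Bᶜ) :
    ¬ AICrosses A B := by
  rintro ⟨h1, h2, h3, h4⟩
  unfold AlmostSub at h
  rw [stabilizer_compl_eq, compl_compl] at h
  rcases h with h | h | h | h
  · exact h2 h
  · exact h1 h
  · exact h4 h
  · exact h3 h

/-- As soon as some member of `Σ(Xⱼ)` is comparable to some member of `Σ(Xₖ)`, sandwiching bounds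
every member of `Σ(Xⱼ)` above and below by members of `Σ(Xₖ)`. -/
lemma exists_bounds (hX : ∀ j, TreeLike (X j)) (hsand : Sandwiching X) {j k : Fin n}
    (hc : ∃ A ∈ TransSet (X j), ∃ B ∈ TransSet (X k), AILE A B)
    {E : Set G} (hE : E ∈ TransSet (X j)) :
    (∃ D ∈ TransSet (X k), AILE D E) ∧ ∃ D ∈ TransSet (X k), AILE E D := by
  have nX := (hX j).nontrivAI (self_mem_transSet (X j))
  rcases hsand j k with ⟨A, hA, B, hB, hAX, hXB⟩ | hcross
  · have nA := (hX k).nontrivAI hA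
    have nB := (hX k).nontrivAI hB
    obtain ⟨g, rfl | rfl⟩ := hE
    · exact ⟨⟨g • A, smul_mem_transSet g hA, hAX.smul g⟩,
        ⟨g • B, smul_mem_transSet g hB, hXB.smul g⟩⟩
    · rw [← Set.smul_set_compl]
      exact ⟨⟨g • Bᶜ, smul_mem_transSet g (compl_mem_transSet hB), (hXB.compl nX nB).smul g⟩,
        ⟨g • Aᶜ, smul_mem_transSet g (compl_mem_transSet hA), (hAX.compl nA nX).smul g⟩⟩
  · exfalso
    obtain ⟨A, ⟨g, hg⟩, B, hB, hAB⟩ := hc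
    have hB' : g⁻¹ • B ∈ TransSet (X k) := smul_mem_transSet _ hB
    have nTB := (hX k).nontrivAI hB'
    have hAB' := hAB.smul g⁻¹
    refine not_crosses_of_almostSub ?_ (hcross _ hB')
    rcases hg with rfl | rfl
    · rw [inv_smul_smul] at hAB'
      exact Or.inl (hAB'.almostSub nX nTB)
    · rw [Set.smul_set_compl, inv_smul_smul] at hAB'
      exact Or.inr (Or.inr (Or.inl (hAB'.almostSub nX.compl nTB)))

/-- `W` is an ultrafilter on the union of the families `Σ(Xⱼ)`, `j ∈ s`, whose trace on each
`Σ(Xⱼ)` has only finitely many members below any given element; the latter is a strong form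
of the descending chain condition. -/
structure IsDiscreteUltrafilter (X : Fin n → Set G) (s : Finset (Fin n)) (W : Set (Set G)) :
    Prop where
  sub : ∀ A ∈ W, ∃ j ∈ s, A ∈ TransSet (X j)
  compl : ∀ j ∈ s, ∀ A ∈ TransSet (X j), (A ∈ W ↔ Aᶜ ∉ W)
  up : ∀ A ∈ W, ∀ j ∈ s, ∀ B ∈ TransSet (X j), AILE A B → B ∈ W
  fin : ∀ j ∈ s, ∀ E ∈ TransSet (X j), {A | A ∈ W ∧ A ∈ TransSet (X j) ∧ A ⊆ E}.Finite

/-- Extension of the ultrafilter by one more family `Σ(Xₖ)`. The elements of `Σ(Xₖ)` above the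
given ultrafilter form an upward closed, consistent set `U`. If `U` leaves a pair undecided it is
completed to the ultrafilter of a vertex. If `U` decides every pair, an element of `U` below `E`
lies above a member `C` of the given ultrafilter with `C ≤ E'`, where `E ≤ E'` comes from
sandwiching; there are finitely many such `C`, and each is bounded below by some `D ∈ Σ(Xₖ)`, so
finiteness follows from finiteness of the intervals `[D, E]`. -/
lemma IsDiscreteUltrafilter.extend (hX : ∀ j, TreeLike (X j)) (hsand : Sandwiching X)
    {s : Finset (Fin n)} {W : Set (Set G)} (hW : IsDiscreteUltrafilter X s W) (k : Fin n) :
    ∃ W', IsDiscreteUltrafilter X (insert k s) W' := by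
  classical
  set U : Set (Set G) := {B | B ∈ TransSet (X k) ∧ ∃ A ∈ W, AILE A B} with hUdef
  have nai : ∀ {j : Fin n} {A : Set G}, A ∈ TransSet (X j) → NontrivAI A :=
    fun h => (hX _).nontrivAI h
  have naiW : ∀ {A : Set G}, A ∈ W → NontrivAI A := by
    intro A hA
    obtain ⟨j, -, h⟩ := hW.sub A hA
    exact nai h
  have hUup : ∀ A ∈ U, ∀ B ∈ TransSet (X k), A ⊆ B → B ∈ U := by
    rintro A ⟨hA, C, hC, hCA⟩ B hB hAB
    exact ⟨hB, C, hC, hCA.trans (naiW hC) (nai hA) (nai hB) (aile_of_subset hAB)⟩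
  have hUcons : ∀ A ∈ U, Aᶜ ∉ U := by
    rintro A ⟨hA, C, hC, hCA⟩ ⟨hA', C', hC', hCA'⟩
    obtain ⟨j, hj, hC'j⟩ := hW.sub C' hC'
    have h1 : AILE A C'ᶜ := by
      have := hCA'.compl (naiW hC') (nai hA')
      rwa [compl_compl] at this
    have h2 := hCA.trans (naiW hC) (nai hA) (naiW hC').compl h1
    exact (hW.compl j hj C' hC'j).1 hC' (hW.up C hC j hj _ (compl_mem_transSet hC'j) h2)
  have hP : ∃ P : Set (Set G), P ⊆ TransSet (X k) ∧ U ⊆ P ∧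
      (∀ A ∈ TransSet (X k), (A ∈ P ↔ Aᶜ ∉ P)) ∧
      (∀ A ∈ P, ∀ B ∈ TransSet (X k), A ⊆ B → B ∈ P) ∧
      ∀ E ∈ TransSet (X k), {A | A ∈ P ∧ A ⊆ E}.Finite := by
    by_cases hund : ∃ B ∈ TransSet (X k), B ∉ U ∧ Bᶜ ∉ U
    · obtain ⟨B, hB, hBU, hBU'⟩ := hund
      exact (hX k).exists_vertex (fun A h => h.1) hUup hB hBU hBU'
    · push Not at hund
      refine ⟨U, fun A h => h.1, subset_rfl, ?_, hUup, ?_⟩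
      · intro A hA
        refine ⟨hUcons A, fun h => ?_⟩
        by_contra h'
        exact h (hund A hA h')
      · intro E hE
        -- the members of the given ultrafilter that lie below some element of `Σ(Xₖ)` below `E`
        set Q : Set (Set G) := {C | C ∈ W ∧ ∃ A ∈ TransSet (X k), AILE C A ∧ A ⊆ E} with hQ
        have hQj : ∀ j ∈ s, {C | C ∈ Q ∧ C ∈ TransSet (X j)}.Finite := by
          intro j hj
          by_cases hex : ∃ C, C ∈ Q ∧ C ∈ TransSet (X j)
          · obtain ⟨C₀, ⟨-, A₀, hA₀, hCA₀, -⟩, hC₀j⟩ := hex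
            have hcomp : ∃ A ∈ TransSet (X k), ∃ B ∈ TransSet (X j), AILE A B :=
              ⟨_, compl_mem_transSet hA₀, _, compl_mem_transSet hC₀j,
                hCA₀.compl (nai hC₀j) (nai hA₀)⟩
            obtain ⟨-, E', hE', hEE'⟩ := exists_bounds hX hsand hcomp hE
            refine (hW.fin j hj E' hE').subset ?_
            rintro C ⟨⟨hCW, A, hA, hCA, hAE⟩, hCj⟩
            refine ⟨hCW, hCj, (hX j).subset_of_aile hCj hE' ?_⟩
            exact (hCA.trans (nai hCj) (nai hA) (nai hE) (aile_of_subset hAE)).trans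
              (nai hCj) (nai hE) (nai hE') hEE'
          · refine Set.finite_empty.subset ?_
            intro C hC
            exact (hex ⟨C, hC⟩).elim
        have hQfin : Q.Finite := by
          refine (s.finite_toSet.biUnion hQj).subset ?_
          intro C hC
          obtain ⟨j, hj, hCj⟩ := hW.sub C hC.1
          exact Set.mem_biUnion (Finset.mem_coe.2 hj) ⟨hC, hCj⟩
        have hfin : ∀ C ∈ Q, {A | A ∈ TransSet (X k) ∧ AILE C A ∧ A ⊆ E}.Finite := by
          rintro C ⟨hCW, A₀, hA₀, hCA₀, -⟩
          obtain ⟨j, hj, hCj⟩ := hW.sub C hCW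
          obtain ⟨⟨D, hD, hDC⟩, -⟩ := exists_bounds hX hsand ⟨C, hCj, A₀, hA₀, hCA₀⟩ hCj
          refine ((hX k).finite_interval hD hE).subset ?_
          rintro A ⟨hA, hCA, hAE⟩
          exact ⟨hA, (hX k).subset_of_aile hD hA
            (hDC.trans (nai hD) (nai hCj) (nai hA) hCA), hAE⟩
        refine (hQfin.biUnion hfin).subset ?_
        rintro A ⟨⟨hA, C, hC, hCA⟩, hAE⟩
        exact Set.mem_biUnion (show C ∈ Q from ⟨hC, A, hA, hCA, hAE⟩) ⟨hA, hCA, hAE⟩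
  obtain ⟨P, hPsub, hUP, hPc, hPup, hPfin⟩ := hP
  have hWk : ∀ A ∈ TransSet (X k), A ∈ W → A ∈ P :=
    fun A hA h => hUP ⟨hA, A, h, aile_of_subset subset_rfl⟩
  -- the families may overlap as sets of subsets of `G`; `P` and `W` agree there
  have hPW : ∀ j ∈ s, ∀ A ∈ TransSet (X j), A ∈ P → A ∈ W := by
    intro j hj A hA h
    rw [hW.compl j hj A hA]
    intro h'
    exact (hPc A (hPsub h)).1 h (hWk _ (compl_mem_transSet (hPsub h)) h')
  have hmemk : ∀ A ∈ TransSet (X k), (A ∈ W ∪ P ↔ A ∈ P) :=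
    fun A hA => ⟨fun h => h.elim (hWk A hA) id, Or.inr⟩
  have hmems : ∀ j ∈ s, ∀ A ∈ TransSet (X j), (A ∈ W ∪ P ↔ A ∈ W) :=
    fun j hj A hA => ⟨fun h => h.elim id (hPW j hj A hA), Or.inl⟩
  refine ⟨W ∪ P, ?_, ?_, ?_, ?_⟩
  · rintro A (hA | hA)
    · obtain ⟨j, hj, h⟩ := hW.sub A hA
      exact ⟨j, Finset.mem_insert_of_mem hj, h⟩
    · exact ⟨k, Finset.mem_insert_self _ _, hPsub hA⟩
  · intro j hj A hA
    rcases Finset.mem_insert.1 hj with rfl | hj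
    · rw [hmemk A hA, hmemk _ (compl_mem_transSet hA)]
      exact hPc A hA
    · rw [hmems j hj A hA, hmems j hj _ (compl_mem_transSet hA)]
      exact hW.compl j hj A hA
  · rintro A hA j hj B hB hAB
    rcases Finset.mem_insert.1 hj with rfl | hj
    · rcases hA with hA | hA
      · exact Or.inr (hUP ⟨hB, A, hA, hAB⟩)
      · exact Or.inr (hPup A hA B hB ((hX _).subset_of_aile (hPsub hA) hB hAB))
    · rcases hA with hA | hA
      · exact Or.inl (hW.up A hA j hj B hB hAB)
      · refine Or.inl ?_
        by_contra hBW
        have hB' : Bᶜ ∈ W := by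
          by_contra h
          exact hBW ((hW.compl j hj B hB).2 h)
        have hA' := compl_mem_transSet (hPsub hA)
        have : Aᶜ ∈ P := hUP ⟨hA', Bᶜ, hB', hAB.compl (nai (hPsub hA)) (nai hB)⟩
        exact (hPc A (hPsub hA)).1 hA this
  · intro j hj E hE
    rcases Finset.mem_insert.1 hj with rfl | hj
    · refine (hPfin E hE).subset ?_
      rintro A ⟨hA, hAj, hAE⟩
      exact ⟨(hmemk A hAj).1 hA, hAE⟩
    · refine (hW.fin j hj E hE).subset ?_
      rintro A ⟨hA, hAj, hAE⟩
      exact ⟨(hmems j hj A hAj).1 hA, hAj, hAE⟩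

lemma exists_isDiscreteUltrafilter (hX : ∀ j, TreeLike (X j)) (hsand : Sandwiching X)
    (s : Finset (Fin n)) : ∃ W, IsDiscreteUltrafilter X s W := by
  classical
  induction s using Finset.induction_on with
  | empty => exact ⟨∅, by simp, by simp, by simp, by simp⟩
  | insert k s _ ih =>
    obtain ⟨W, hW⟩ := ih
    exact hW.extend hX hsand k

/-- A descending chain visits one family `Σ(Xⱼ)` infinitely often, and from then on takes only
finitely many values there, so some value recurs infinitely often; by antisymmetry the chain is
constant once it has reached that value. -/
lemma IsDiscreteUltrafilter.dcc (hX : ∀ j, TreeLike (X j)) {W : Set (Set G)}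
    (hW : IsDiscreteUltrafilter X Finset.univ W) (c : ℕ → Set G) (hc : ∀ i, c i ∈ W)
    (hdesc : ∀ i, AILE (c (i + 1)) (c i)) : ∃ N : ℕ, ∀ m : ℕ, N ≤ m → c m = c N := by
  have hnai : ∀ i, NontrivAI (c i) := by
    intro i
    obtain ⟨j, -, h⟩ := hW.sub _ (hc i)
    exact (hX j).nontrivAI h
  have hanti : ∀ i d, AILE (c (i + d)) (c i) := by
    intro i d
    induction d with
    | zero => exact aile_of_subset subset_rfl
    | succ d ih => exact (hdesc (i + d)).trans (hnai _) (hnai _) (hnai _) ih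
  have hle : ∀ i m, i ≤ m → AILE (c m) (c i) := by
    intro i m h
    obtain ⟨d, rfl⟩ := Nat.exists_eq_add_of_le h
    exact hanti i d
  choose f _ hf using fun i => hW.sub _ (hc i)
  obtain ⟨j, hj⟩ := Finite.exists_infinite_fiber f
  have hinf : (f ⁻¹' {j}).Infinite := Set.infinite_coe_iff.1 hj
  obtain ⟨N₀, hN₀⟩ := hinf.nonempty
  have hcj : ∀ i, i ∈ f ⁻¹' {j} → c i ∈ TransSet (X j) := by
    intro i hi
    have := hf i
    rwa [show f i = j from hi] at this
  have hinf' : (f ⁻¹' {j} ∩ Set.Ici N₀).Infinite := by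
    refine (hinf.sdiff (Set.finite_Iio N₀)).mono ?_
    rintro i ⟨h1, h2⟩
    exact ⟨h1, not_lt.1 fun h => h2 (Set.mem_Iio.2 h)⟩
  have hmaps : Set.MapsTo c (f ⁻¹' {j} ∩ Set.Ici N₀)
      {A | A ∈ W ∧ A ∈ TransSet (X j) ∧ A ⊆ c N₀} := by
    rintro i ⟨hi, hi'⟩
    exact ⟨hc i, hcj i hi, (hX j).subset_of_aile (hcj i hi) (hcj N₀ hN₀) (hle _ _ hi')⟩
  obtain ⟨A, hAinf⟩ : ∃ A, {i | i ∈ f ⁻¹' {j} ∩ Set.Ici N₀ ∧ c i = A}.Infinite := by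
    by_contra h
    simp only [not_exists, Set.not_infinite] at h
    refine hinf' (((hW.fin j (Finset.mem_univ j) _ (hcj N₀ hN₀)).biUnion fun A _ => h A).subset ?_)
    intro i hi
    exact Set.mem_biUnion (hmaps hi) ⟨hi, rfl⟩
  obtain ⟨N, hN⟩ := hAinf.nonempty
  have hNA : c N = A := hN.2
  refine ⟨N, fun m hm => ?_⟩
  obtain ⟨M, hM, hmM⟩ := hAinf.exists_gt m
  have hMA : c M = A := hM.2
  refine AILE.antisymm (hnai m) (hnai N) (hle N m hm) ?_
  rw [hNA, ← hMA]
  exact hle m M hmM.le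

end Construction

/-- for a finite collection of pairwise non-isomorphic splittings
satisfying sandwiching, there exists an ultrafilter on `(Σ, ≤)` (with `≤` almost
inclusion) satisfying the descending chain condition. -/
theorem statement18 {G : Type u} [Group G] (n : ℕ) {V : Fin n → Type v}
    (T : ∀ j, GTree G (V j)) (a b v : ∀ j, V j) (H : Fin n → Subgroup G)
    (hsplit : ∀ j, (T j).IsSplitting (a j) (b j) (H j))
    (X : Fin n → Set G) (hX : ∀ j, X j = (T j).standardSet (a j) (b j) (v j))
    (hnoniso : ∀ j k, j ≠ k → ¬ (T j).EquivIso (T k))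
    (hsand : Sandwiching X) :
    ∃ Vf : Set (Set G), Vf ⊆ (⋃ j, TransSet (X j)) ∧
      (∀ A ∈ ⋃ j, TransSet (X j), (A ∈ Vf ↔ Aᶜ ∉ Vf)) ∧
      (∀ A ∈ Vf, ∀ B ∈ ⋃ j, TransSet (X j), AILE A B → B ∈ Vf) ∧
      (∀ c : ℕ → Set G, (∀ i, c i ∈ Vf) → (∀ i, AILE (c (i + 1)) (c i)) →
        ∃ N : ℕ, ∀ m : ℕ, N ≤ m → c m = c N) := by
  have htree : ∀ j, TreeLike (X j) := fun j => by
    rw [hX j]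
    exact (hsplit j).treeLike (v j)
  obtain ⟨W, hW⟩ := exists_isDiscreteUltrafilter htree hsand Finset.univ
  refine ⟨W, fun A hA => ?_, fun A hA => ?_, fun A hA B hB hAB => ?_, hW.dcc htree⟩
  · obtain ⟨j, -, h⟩ := hW.sub A hA
    exact Set.mem_iUnion.2 ⟨j, h⟩
  · obtain ⟨j, h⟩ := Set.mem_iUnion.1 hA
    exact hW.compl j (Finset.mem_univ j) A h
  · obtain ⟨j, h⟩ := Set.mem_iUnion.1 hB
    exact hW.up A hA j (Finset.mem_univ j) B h hAB
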